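/- arXiv:2407.18800 — 2 statements merged into one kernel-verified Lean document; each statement's English description precedes it below -/
import Mathlib

section
/- Let G be a finite simple graph and s : V(G) → ℕ. Let G' be an induced subgraph of G and let S = G − V(G'). If G is s-irreducible, then G' is s'-irreducible, where s'(v) = s(v) − d_S(v) for every v ∈ V(G') and d_S(v) is the number of neighbors of v in S. -/
/-- A graph `K` is `s`-reducible (for list sizes given by `s : W → ℤ`):
there is a proper subgraph `H ⊊ K` such that for every list assignment `L`
with `|L(v)| ≥ s(v)` for all `v`, if `H` is `L`-colorable then `K` is `L`-colorable. -/
def SReducibleZ {W : Type*} (K : SimpleGraph W) (s : W → ℤ) : Prop :=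
  ∃ H : K.Subgraph, H ≠ ⊤ ∧ ∀ L : W → Finset ℕ, (∀ v, s v ≤ ((L v).card : ℤ)) →
    (∃ φ : W → ℕ, (∀ v ∈ H.verts, φ v ∈ L v) ∧ ∀ ⦃u v⦄, H.Adj u v → φ u ≠ φ v) →
    (∃ φ : W → ℕ, (∀ v, φ v ∈ L v) ∧ ∀ ⦃u v⦄, K.Adj u v → φ u ≠ φ v)

/-!
Extend a proper subgraph `H` of `G'` witnessing reducibility to a subgraph of `G` by adding back all
of `S` together with the edges joining `S` to `S` and to `H`. Given a list coloring `φ` of this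
extension, delete from `L(v)` the colors that `φ` uses on the neighbors of `v` in `S`. At most
`d_S(v)` colors are lost, and `φ` still colors `H` from the shortened lists; so reducibility of
`G'` yields a coloring of `G'` from them, which is compatible with `φ` on `S`.
-/

/-- `φ` is an `L`-coloring of the subgraph `H`. It is a function on all of `V`, whose values outside
`H.verts` are irrelevant; colorings of the whole graph are the case `H = ⊤`. -/
structure IsListColoring {V α : Type*} {G : SimpleGraph V} (H : G.Subgraph) (L : V → Finset α)
    (φ : V → α) : Prop where
  mem_list : ∀ v ∈ H.verts, φ v ∈ L v
  ne_of_adj : ∀ ⦃u v⦄, H.Adj u v → φ u ≠ φ v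

theorem isListColoring_iff {V α : Type*} {G : SimpleGraph V} {H : G.Subgraph} {L : V → Finset α}
    {φ : V → α} :
    IsListColoring H L φ ↔ (∀ v ∈ H.verts, φ v ∈ L v) ∧ ∀ ⦃u v⦄, H.Adj u v → φ u ≠ φ v :=
  ⟨fun ⟨h₁, h₂⟩ => ⟨h₁, h₂⟩, fun ⟨h₁, h₂⟩ => ⟨h₁, h₂⟩⟩

theorem sReducibleZ_iff_isListColoring {V : Type*} {G : SimpleGraph V} {s : V → ℤ} :
    SReducibleZ G s ↔ ∃ H : G.Subgraph, H ≠ ⊤ ∧ ∀ L : V → Finset ℕ, (∀ v, s v ≤ (L v).card) →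
      (∃ φ, IsListColoring H L φ) → ∃ φ, IsListColoring (⊤ : G.Subgraph) L φ := by
  simp [SReducibleZ, isListColoring_iff]

section Embedding

variable {U V α : Type*} {K : SimpleGraph U} {G : SimpleGraph V} (f : K ↪g G)

/-- The largest subgraph of `G` whose restriction along `f` is `H`: all vertices outside the range
of `f` are added to `H`, together with all edges of `G` joining them to each other and to `H`. -/
def extendSubgraph (H : K.Subgraph) : G.Subgraph where
  verts := {v | ∀ a, f a = v → a ∈ H.verts}
  Adj u v := G.Adj u v ∧ (∀ a, f a = u → a ∈ H.verts) ∧ (∀ b, f b = v → b ∈ H.verts) ∧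
    ∀ a b, f a = u → f b = v → H.Adj a b
  adj_sub h := h.1
  edge_vert h := h.2.1
  symm := ⟨fun _ _ ⟨hG, hu, hv, hH⟩ => ⟨hG.symm, hv, hu, fun a b ha hb => (hH b a hb ha).symm⟩⟩

variable {f}

theorem mem_verts_extendSubgraph_of_notMem_range {H : K.Subgraph} {v : V}
    (hv : v ∉ Set.range f) : v ∈ (extendSubgraph f H).verts :=
  fun a ha => absurd ⟨a, ha⟩ hv

@[simp]
theorem apply_mem_verts_extendSubgraph {H : K.Subgraph} {a : U} :
    f a ∈ (extendSubgraph f H).verts ↔ a ∈ H.verts := by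
  simp [extendSubgraph]

@[simp]
theorem extendSubgraph_adj_apply {H : K.Subgraph} {a b : U} :
    (extendSubgraph f H).Adj (f a) (f b) ↔ H.Adj a b := by
  suffices H.Adj a b → K.Adj a b ∧ a ∈ H.verts ∧ b ∈ H.verts by simpa [extendSubgraph, ← and_assoc]
  exact fun h => ⟨h.adj_sub, h.fst_mem, h.snd_mem⟩

theorem extendSubgraph_adj_of_notMem_range {H : K.Subgraph} {u v : V} (hu : u ∉ Set.range f)
    (hv : v ∈ (extendSubgraph f H).verts) (huv : G.Adj u v) : (extendSubgraph f H).Adj u v :=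
  ⟨huv, mem_verts_extendSubgraph_of_notMem_range hu, hv, fun a _ ha => absurd ⟨a, ha⟩ hu⟩

variable (f) in
theorem comap_extendSubgraph (H : K.Subgraph) : (extendSubgraph f H).comap f.toHom = H := by
  ext a b
  · simp
  · simpa using SimpleGraph.Subgraph.Adj.adj_sub

theorem extendSubgraph_ne_top {H : K.Subgraph} (hH : H ≠ ⊤) : extendSubgraph f H ≠ ⊤ := by
  intro htop
  apply hH
  rw [← comap_extendSubgraph f H, htop]
  ext a b <;> simp

variable (f)

/-- The neighbors of `f a` outside the copy of `K` in `G`; their number is `d_S(a)`. -/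
def outsideNeighborSet (a : U) : Set V :=
  {u | u ∉ Set.range f ∧ G.Adj u (f a)}

open Classical in
/-- The part of the list `L` that remains available at a vertex of `K` once the vertices of `G`
outside `K` are colored by `φ`. -/
noncomputable def residualList (L : V → Finset α) (φ : V → α) (a : U) : Finset α :=
  {c ∈ L (f a) | c ∉ φ '' outsideNeighborSet f a}

variable {f}

theorem mem_residualList {L : V → Finset α} {φ : V → α} {a : U} {c : α} :
    c ∈ residualList f L φ a ↔ c ∈ L (f a) ∧ ∀ u ∉ Set.range f, G.Adj u (f a) → φ u ≠ c := by
  classical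
  simp [residualList, outsideNeighborSet]

theorem card_sub_ncard_le_card_residualList (L : V → Finset α) (φ : V → α) {a : U}
    (hfin : (outsideNeighborSet f a).Finite) :
    (L (f a)).card - (outsideNeighborSet f a).ncard ≤ (residualList f L φ a).card := by
  have coe_eq : (residualList f L φ a : Set α) = ↑(L (f a)) \ φ '' outsideNeighborSet f a := by
    ext c
    simp [residualList]
  calc (L (f a)).card - (outsideNeighborSet f a).ncard
      ≤ (L (f a) : Set α).ncard - (φ '' outsideNeighborSet f a).ncard := by
        rw [Set.ncard_coe_finset]
        exact Nat.sub_le_sub_left (Set.ncard_image_le hfin) _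
    _ ≤ (↑(L (f a)) \ φ '' outsideNeighborSet f a : Set α).ncard :=
        Set.le_ncard_sdiff _ _ (hfin.image φ)
    _ = (residualList f L φ a).card := by rw [← coe_eq, Set.ncard_coe_finset]

namespace IsListColoring

variable {H : K.Subgraph} {L : V → Finset α} {φ : V → α}

theorem comp_embedding (hφ : IsListColoring (extendSubgraph f H) L φ) :
    IsListColoring H (residualList f L φ) (φ ∘ f) where
  mem_list a ha := by
    have hfa : f a ∈ (extendSubgraph f H).verts := apply_mem_verts_extendSubgraph.2 ha
    exact mem_residualList.2 ⟨hφ.mem_list _ hfa, fun u hu hua =>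
      hφ.ne_of_adj (extendSubgraph_adj_of_notMem_range hu hfa hua)⟩
  ne_of_adj _ _ hab := hφ.ne_of_adj (extendSubgraph_adj_apply.2 hab)

theorem extend (hφ : IsListColoring (extendSubgraph f H) L φ) {ψ : U → α}
    (hψ : IsListColoring (⊤ : K.Subgraph) (residualList f L φ) ψ) :
    IsListColoring (⊤ : G.Subgraph) L (Function.extend f ψ φ) := by
  have on_range (a : U) : Function.extend f ψ φ (f a) = ψ a := f.injective.extend_apply ψ φ a
  have off_range {v : V} (hv : v ∉ Set.range f) : Function.extend f ψ φ v = φ v :=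
    Function.extend_apply' ψ φ v hv
  have ψ_mem (a : U) := mem_residualList.1 (hψ.mem_list a trivial)
  refine ⟨fun v _ => ?_, fun u v huv => ?_⟩
  · by_cases hv : v ∈ Set.range f
    · obtain ⟨a, rfl⟩ := hv
      exact on_range a ▸ (ψ_mem a).1
    · exact off_range hv ▸ hφ.mem_list v (mem_verts_extendSubgraph_of_notMem_range hv)
  · by_cases hu : u ∈ Set.range f <;> by_cases hv : v ∈ Set.range f
    · obtain ⟨a, rfl⟩ := hu
      obtain ⟨b, rfl⟩ := hv
      rw [on_range, on_range]
      exact hψ.ne_of_adj (f.map_adj_iff.1 huv)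
    · obtain ⟨a, rfl⟩ := hu
      rw [on_range, off_range hv]
      exact ((ψ_mem a).2 v hv huv.symm).symm
    · obtain ⟨b, rfl⟩ := hv
      rw [off_range hu, on_range]
      exact (ψ_mem b).2 u hu huv
    · rw [off_range hu, off_range hv]
      exact hφ.ne_of_adj (extendSubgraph_adj_of_notMem_range hu
        (mem_verts_extendSubgraph_of_notMem_range hv) huv)

end IsListColoring

theorem irreducible_induce_general (f : K ↪g G) (s : V → ℤ)
    (hfin : ∀ a, (outsideNeighborSet f a).Finite) (h : ¬ SReducibleZ G s) :
    ¬ SReducibleZ K (fun a => s (f a) - (outsideNeighborSet f a).ncard) := by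
  contrapose! h
  obtain ⟨H, hH, hred⟩ := sReducibleZ_iff_isListColoring.1 h
  refine sReducibleZ_iff_isListColoring.2
    ⟨extendSubgraph f H, extendSubgraph_ne_top hH, fun L hL ⟨φ, hφ⟩ => ?_⟩
  have residual_large (a : U) :
      s (f a) - (outsideNeighborSet f a).ncard ≤ (residualList f L φ a).card := by
    have := card_sub_ncard_le_card_residualList L φ (hfin a)
    have := hL (f a)
    lia
  obtain ⟨ψ, hψ⟩ := hred (residualList f L φ) residual_large ⟨φ ∘ f, hφ.comp_embedding⟩
  exact ⟨Function.extend f ψ φ, hφ.extend hψ⟩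

end Embedding

/-- If `G` is `s`-irreducible, then the subgraph `G'` of `G` induced by a vertex set `A`
is `s'`-irreducible, where `s'(v) = s(v) − d_S(v)` and `d_S(v)` is the number of
neighbors of `v` in `S = G − V(G')`, i.e. in the complement of `A`. -/
theorem irreducible_induce {V : Type*} [Fintype V] (G : SimpleGraph V) (s : V → ℕ)
    (A : Set V) (h : ¬ SReducibleZ G (fun v => (s v : ℤ))) :
    ¬ SReducibleZ (G.induce A)
        (fun v => (s v.val : ℤ) - ({u | u ∉ A ∧ G.Adj u v.val}.ncard : ℤ)) := by
  simpa [outsideNeighborSet] using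
    irreducible_induce_general (SimpleGraph.Embedding.induce A) _ (fun _ => Set.toFinite _) h
end

section
/- Let K be the graph with vertex set {u, v, w, x, y} and edge set {uv, uw, ux, uy, vw, wx, xy}, and let s(u) = 4 and s(v) = s(w) = s(x) = s(y) = 2. Then K is s-reducible; in fact, the proper subgraph H = K − wx witnesses reducibility: for every s-list assignment L, if K − wx is L-colorable then K is L-colorable. -/
/-- The graph `K` with vertices `u = 0`, `v = 1`, `w = 2`, `x = 3`, `y = 4` and
edges `uv, uw, ux, uy, vw, wx, xy`. -/
def Kgraph : SimpleGraph (Fin 5) :=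
  SimpleGraph.fromRel (fun a b =>
    (a = 0 ∧ b = 1) ∨ (a = 0 ∧ b = 2) ∨ (a = 0 ∧ b = 3) ∨ (a = 0 ∧ b = 4) ∨
    (a = 1 ∧ b = 2) ∨ (a = 2 ∧ b = 3) ∨ (a = 3 ∧ b = 4))

/-- The list sizes: `s(u) = 4` and `s(v) = s(w) = s(x) = s(y) = 2`. -/
def sK : Fin 5 → ℕ := ![4, 2, 2, 2, 2]

/-!
Suppose a colouring of `K - wx` gives `w` and `x` a common colour `a`, and shrink every list to its
prescribed size. Removing a colour `e ∈ L u` from the lists along the path `v w x y` destroys greedy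
colourability only if `e` lies in at least two of these lists. The four lists have eight entries and
`L u` has four colours, so if every choice for `u` fails, then each colour of `L u` lies in exactly
two of the lists, and the lists are contained in `L u`. In particular `a` occurs only at `w` and
`x`, and the failure of `u = a` forces `L w = L x = {a, b}`. Hence `L v` avoids `a` and `b`, and a
colour `p ∈ L v` works for `u`: it lies in just one list of the path other than `L v`, while the
colour left for `v` does not interfere with `w`.

The argument only uses that the path is a tree with a leaf `v` whose neighbour `w` is adjacent
to `x`.
-/

open Finset SimpleGraph

variable {V α : Type*}

/-- A proper colouring `φ` of `G` with every colour chosen from the list `L v` of its vertex. -/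
def IsListColoring_s6 (G : SimpleGraph V) (L : V → Finset α) (φ : V → α) : Prop :=
  (∀ v, φ v ∈ L v) ∧ ∀ ⦃u v⦄, G.Adj u v → φ u ≠ φ v

section Tree

variable {G : SimpleGraph V}

theorem IsListColoring_s6.mono {L L' : V → Finset α} {φ : V → α} (hφ : IsListColoring_s6 G L φ)
    (h : ∀ v, L v ⊆ L' v) : IsListColoring_s6 G L' φ :=
  ⟨fun v => h v (hφ.1 v), hφ.2⟩

theorem IsListColoring_s6.of_deleteEdges {L : V → Finset α} {φ : V → α} {x y : V}
    (hφ : IsListColoring_s6 (G.deleteEdges {s(x, y)}) L φ) (hxy : φ x ≠ φ y) :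
    IsListColoring_s6 G L φ := by
  refine ⟨hφ.1, fun u v huv => ?_⟩
  by_cases hedge : s(u, v) = s(x, y)
  · rcases Sym2.eq_iff.1 hedge with ⟨rfl, rfl⟩ | ⟨rfl, rfl⟩
    exacts [hxy, hxy.symm]
  · exact hφ.2 (deleteEdges_adj.2 ⟨huv, hedge⟩)

theorem deleteEdges_singleton_ne_top {x y : V} (h : G.Adj x y) :
    (⊤ : G.Subgraph).deleteEdges {s(x, y)} ≠ ⊤ := by
  intro htop
  have hadj : (⊤ : G.Subgraph).Adj x y := h
  rw [← htop] at hadj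
  simp at hadj

theorem exists_isListColoring_of_greedy [Finite V] {L : V → Finset α} (hL : ∀ v, (L v).Nonempty)
    (r : V → ℕ)
    (h : ∀ v (ψ : V → α), (∀ w, ψ w ∈ L w) →
      ∃ c ∈ L v, ∀ w, G.Adj v w → r w ≤ r v → c ≠ ψ w) :
    ∃ φ, IsListColoring_s6 G L φ := by
  classical
  have := Fintype.ofFinite V
  suffices ∀ s : Finset V, ∃ φ : V → α, (∀ v, φ v ∈ L v) ∧
      ∀ v ∈ s, ∀ w ∈ s, G.Adj v w → φ v ≠ φ w by
    obtain ⟨φ, hmem, hne⟩ := this univ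
    exact ⟨φ, hmem, fun v w => hne v (mem_univ v) w (mem_univ w)⟩
  intro s
  induction s using induction_on_max_value r with
  | empty =>
    choose φ hφ using hL
    exact ⟨φ, hφ, by simp⟩
  | insert v s hv hmax ih =>
    obtain ⟨ψ, hmem, hne⟩ := ih
    obtain ⟨c, hc, hcne⟩ := h v ψ hmem
    have hcs : ∀ w ∈ s, G.Adj v w → c ≠ ψ w := fun w hw hvw => hcne w hvw (hmax w hw)
    refine ⟨Function.update ψ v c, fun w => ?_, fun w hw z hz hwz => ?_⟩
    · rcases eq_or_ne w v with rfl | hwv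
      · simpa using hc
      · simpa [hwv] using hmem w
    · grind [Function.update_apply, G.loopless.irrefl, G.adj_comm]

theorem eq_of_adj_of_dist_le (hG : G.IsTree) {k v w z : V} (hw : G.Adj v w) (hz : G.Adj v z)
    (hwk : G.dist k w ≤ G.dist k v) (hzk : G.dist k z ≤ G.dist k v) : w = z := by
  obtain ⟨p, hp, -⟩ := hG.connected.exists_path_of_dist k v
  have eq_penultimate : ∀ y, G.Adj v y → G.dist k y ≤ G.dist k v → y = p.penultimate := by
    intro y hy hyk
    obtain ⟨q, hq, hqk⟩ := hG.connected.exists_path_of_dist k y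
    have hvq : v ∉ q.support := fun hv => by
      have hlen := congrArg Walk.length (hG.isAcyclic.path_concat hp hq hy hv)
      rw [Walk.length_concat] at hlen
      have := dist_le p
      lia
    exact hG.isAcyclic.eq_penultimate_of_adj_end hp hy
      (hG.isAcyclic.mem_support_of_ne_mem_support_of_adj_of_isPath hp hq hy hvq)
  rw [eq_penultimate w hw hwk, eq_penultimate z hz hzk]

theorem exists_isListColoring_of_isTree [Finite V] (hG : G.IsTree) (k : V) {L : V → Finset α}
    (hL : ∀ v, (L v).Nonempty)
    (h : ∀ v w, G.Adj v w → G.dist k w < G.dist k v → ∀ a ∈ L w, ∃ b ∈ L v, b ≠ a) :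
    ∃ φ, IsListColoring_s6 G L φ := by
  refine exists_isListColoring_of_greedy hL (G.dist k) fun v ψ hψ => ?_
  by_cases hparent : ∃ w, G.Adj v w ∧ G.dist k w ≤ G.dist k v
  · obtain ⟨w, hvw, hwk⟩ := hparent
    obtain ⟨c, hc, hcw⟩ := h v w hvw (hwk.lt_of_ne (hG.dist_ne_of_adj k hvw).symm) _ (hψ w)
    refine ⟨c, hc, fun z hvz hzk => ?_⟩
    rwa [eq_of_adj_of_dist_le hG hvz hvw hzk hwk]
  · obtain ⟨c, hc⟩ := hL v
    exact ⟨c, hc, fun w hvw hwk => absurd ⟨w, hvw, hwk⟩ hparent⟩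

variable [DecidableEq α]

theorem exists_isListColoring_erase_of_pair [Finite V] (hG : G.IsTree) {L : V → Finset α}
    (hL : ∀ v, 2 ≤ #(L v)) {e : α} (k z : V) (he : ∀ v, e ∈ L v → v = k ∨ v = z)
    (hz : ∀ v, G.Adj z v → G.dist k v < G.dist k z →
      ∀ a ∈ (L v).erase e, ∃ b ∈ (L z).erase e, b ≠ a) :
    ∃ φ, IsListColoring_s6 G (fun v => (L v).erase e) φ := by
  refine exists_isListColoring_of_isTree hG k (fun v => ?_) fun v w hvw hlt a ha => ?_
  · obtain ⟨b, hb, hbe⟩ := exists_mem_ne (hL v) e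
    exact ⟨b, mem_erase.2 ⟨hbe, hb⟩⟩
  · rcases eq_or_ne v z with rfl | hvz
    · exact hz w hvw hlt a ha
    · have hev : e ∉ L v := fun hev => by
        obtain rfl := (he v hev).resolve_right hvz
        simp at hlt
      rw [erase_eq_of_notMem hev]
      exact exists_mem_ne (hL v) a

variable [Fintype V]

theorem two_le_card_of_not_exists_isListColoring_erase (hG : G.IsTree) {L : V → Finset α}
    (hL : ∀ v, 2 ≤ #(L v)) {e : α}
    (he : ¬ ∃ φ, IsListColoring_s6 G (fun v => (L v).erase e) φ) : 2 ≤ #{v | e ∈ L v} := by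
  by_contra! hcard
  have := hG.connected.nonempty
  obtain ⟨k, hk⟩ := card_le_one_iff_subset_singleton.1 (Nat.le_of_lt_succ hcard)
  refine he (exists_isListColoring_erase_of_pair hG hL k k (fun v hv => ?_) fun v _ hlt => ?_)
  · exact .inl (mem_singleton.1 (hk (mem_filter.2 ⟨mem_univ v, hv⟩)))
  · simp at hlt

theorem card_eq_and_subset_of_le_card {L : V → Finset α} {C : Finset α} {m : ℕ}
    (hL : ∀ v, #(L v) ≤ m) (hC : Fintype.card V ≤ #C) (h : ∀ e ∈ C, m ≤ #{v | e ∈ L v}) :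
    (∀ e ∈ C, #{v | e ∈ L v} = m) ∧ ∀ v, L v ⊆ C := by
  have hcount : ∑ e ∈ C, #{v | e ∈ L v} = ∑ v, #{e ∈ C | e ∈ L v} :=
    sum_card_bipartiteAbove_eq_sum_card_bipartiteBelow (fun e v => e ∈ L v)
  have hlower : ∑ _e ∈ C, m ≤ ∑ e ∈ C, #{v | e ∈ L v} := sum_le_sum h
  have hinter : ∀ v ∈ univ, #{e ∈ C | e ∈ L v} ≤ #(L v) := fun v _ =>
    card_le_card fun e he => (mem_filter.1 he).2
  have hsum : ∑ v, #{e ∈ C | e ∈ L v} ≤ ∑ v, #(L v) := sum_le_sum hinter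
  have hupper : ∑ v, #(L v) ≤ ∑ _e ∈ C, m := calc
    ∑ v, #(L v) ≤ ∑ _v : V, m := sum_le_sum fun v _ => hL v
    _ = Fintype.card V * m := by simp
    _ ≤ #C * m := Nat.mul_le_mul_right m hC
    _ = ∑ _e ∈ C, m := by simp
  constructor
  · have heq := (sum_eq_sum_iff_of_le h).1 (by lia)
    exact fun e he => (heq e he).symm
  · have heq := (sum_eq_sum_iff_of_le hinter).1 (by lia)
    intro v e he
    have hfilter : {e ∈ C | e ∈ L v} = L v :=
      eq_of_subset_of_card_le (fun c hc => (mem_filter.1 hc).2) (heq v (mem_univ v)).ge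
    exact (mem_filter.1 (hfilter ▸ he)).1

theorem eq_or_eq_of_mem_of_card_eq_two {L : V → Finset α} {e : α} (he : #{v | e ∈ L v} = 2)
    {w x : V} (hwx : w ≠ x) (hw : e ∈ L w) (hx : e ∈ L x) {v : V} (hv : e ∈ L v) :
    v = w ∨ v = x := by
  classical
  have hpair : ({w, x} : Finset V) = ({v | e ∈ L v} : Finset V) :=
    eq_of_subset_of_card_le (by simp [insert_subset_iff, hw, hx]) (by rw [he, card_pair hwx])
  have hmem : v ∈ ({w, x} : Finset V) := hpair ▸ mem_filter.2 ⟨mem_univ v, hv⟩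
  simpa using hmem

theorem eq_of_not_exists_isListColoring_erase (hG : G.IsTree) {L : V → Finset α}
    (hL : ∀ v, #(L v) = 2) {a : α} {w x : V} (hwx : G.Adj w x) (haw : a ∈ L w) (hax : a ∈ L x)
    (ha : #{v | a ∈ L v} = 2) (hcol : ¬ ∃ φ, IsListColoring_s6 G (fun v => (L v).erase a) φ) :
    L w = L x := by
  by_contra hne
  refine hcol (exists_isListColoring_erase_of_pair hG (fun v => (hL v).ge) w x
    (fun v => eq_or_eq_of_mem_of_card_eq_two ha hwx.ne haw hax) fun v hv hlt b hb => ?_)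
  obtain rfl : w = v := by
    rw [dist_eq_one_iff_adj.2 hwx, Nat.lt_one_iff] at hlt
    exact hG.connected.dist_eq_zero_iff.1 hlt
  have hcard : ∀ y, a ∈ L y → #((L y).erase a) = 1 := fun y hay => by
    rw [card_erase_of_mem hay, hL]
  obtain ⟨d, hd⟩ := card_eq_one.1 (hcard x hax)
  obtain ⟨c, hc⟩ := card_eq_one.1 (hcard w haw)
  obtain rfl : b = c := by simpa [hc] using hb
  refine ⟨d, by simp [hd], ?_⟩
  rintro rfl
  exact hne (by rw [← insert_erase haw, ← insert_erase hax, hc, hd])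

/-- Here `C` is the list of a vertex joined to every vertex of `G`, and `e` is its new colour. -/
theorem exists_isListColoring_erase_of_leaf (hG : G.IsTree) {L : V → Finset α}
    (hL : ∀ v, #(L v) = 2) {C : Finset α} (hC : Fintype.card V ≤ #C) {v w x : V}
    (hvw : ∀ z, G.Adj v z → z = w) (hwx : G.Adj w x) (hvx : v ≠ x) {a : α} (haw : a ∈ L w)
    (hax : a ∈ L x) : ∃ e ∈ C, ∃ φ, IsListColoring_s6 G (fun z => (L z).erase e) φ := by
  by_contra hcol
  have hfail : ∀ e ∈ C, ¬ ∃ φ, IsListColoring_s6 G (fun z => (L z).erase e) φ :=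
    fun e he hφ => hcol ⟨e, he, hφ⟩
  obtain ⟨htwo, hsub⟩ := card_eq_and_subset_of_le_card (fun z => (hL z).le) hC fun e he =>
    two_le_card_of_not_exists_isListColoring_erase hG (fun z => (hL z).ge) (hfail e he)
  have honly : ∀ {e y z}, y ≠ z → e ∈ L y → e ∈ L z → ∀ u, e ∈ L u → u = y ∨ u = z :=
    fun hyz hy hz u => eq_or_eq_of_mem_of_card_eq_two (htwo _ (hsub _ hy)) hyz hy hz
  have hLwx : L w = L x := eq_of_not_exists_isListColoring_erase hG hL hwx haw hax
    (htwo a (hsub w haw)) (hfail a (hsub w haw))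
  have hvw_ne : v ≠ w := by
    rintro rfl
    exact hwx.ne (hvw x hwx).symm
  have hdisj : Disjoint (L v) (L w) := disjoint_left.2 fun e hev hew =>
    (honly hwx.ne hew (hLwx ▸ hew) v hev).elim hvw_ne hvx
  obtain ⟨p, hp⟩ : (L v).Nonempty := card_pos.1 (by simp [hL])
  obtain ⟨v', hv', hv'v⟩ := exists_mem_ne (one_lt_two.trans_eq (htwo p (hsub v hp)).symm) v
  refine hfail p (hsub v hp) (exists_isListColoring_erase_of_pair hG (fun z => (hL z).ge) v' v
    (honly hv'v (mem_filter.1 hv').2 hp) fun z hvz _ c hc => ?_)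
  obtain rfl := hvw z hvz
  obtain ⟨b, hb, hbp⟩ := exists_mem_ne (hL v).ge p
  exact ⟨b, mem_erase.2 ⟨hbp, hb⟩, disjoint_iff_ne.1 hdisj b hb c (mem_of_mem_erase hc)⟩

theorem isTree_pathGraph (n : ℕ) : (pathGraph (n + 1)).IsTree := by
  have hconn := pathGraph_connected n
  refine isTree_iff_connected_and_card.2
    ⟨hconn, le_antisymm ?_ hconn.card_vert_le_card_edgeSet_add_one⟩
  let edge (i : Fin n) : (pathGraph (n + 1)).edgeSet :=
    ⟨s(i.castSucc, i.succ), by simp [pathGraph_adj]⟩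
  have hedge : Function.Surjective edge := by
    have hmem : ∀ i j, i.val + 1 = j.val → ∃ k, (edge k).val = s(i, j) := fun i j hij =>
      ⟨⟨i, by lia⟩, by simp [edge, hij]⟩
    rintro ⟨⟨i, j⟩, hij⟩
    rcases pathGraph_adj.1 hij with hij | hij
    · exact (hmem i j hij).imp fun k hk => Subtype.ext hk
    · exact (hmem j i hij).imp fun k hk => Subtype.ext (hk.trans Sym2.eq_swap)
  simpa using Nat.card_le_card_of_surjective edge hedge

end Tree

theorem Kgraph_adj_succ_succ (i j : Fin 4) :
    Kgraph.Adj i.succ j.succ ↔ (pathGraph 4).Adj i j := by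
  fin_cases i <;> fin_cases j <;> simp [Kgraph, pathGraph_adj]

theorem IsListColoring_s6.cons [DecidableEq α] {L : Fin 5 → Finset α} {e : α} (he : e ∈ L 0)
    {φ : Fin 4 → α} (hφ : IsListColoring_s6 (pathGraph 4) (fun i => (L i.succ).erase e) φ) :
    IsListColoring_s6 Kgraph L (Fin.cons e φ) := by
  have hmem : ∀ i, φ i ≠ e ∧ φ i ∈ L i.succ := fun i => mem_erase.1 (hφ.1 i)
  refine ⟨Fin.cases he fun i => (hmem i).2, Fin.cases (Fin.cases ?_ ?_) fun i => Fin.cases ?_ ?_⟩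
  · exact fun h => absurd rfl h.ne
  · exact fun j _ => (hmem j).1.symm
  · exact fun _ => (hmem i).1
  · exact fun j hij => hφ.2 ((Kgraph_adj_succ_succ i j).1 hij)

theorem exists_isListColoring_Kgraph_of_mem {L : Fin 5 → Finset α} (hL : ∀ z, sK z ≤ #(L z))
    {a : α} (haw : a ∈ L 2) (hax : a ∈ L 3) : ∃ φ, IsListColoring_s6 Kgraph L φ := by
  classical
  choose L' haL' hL'L hcard using fun z =>
    exists_subsuperset_card_eq (inter_subset_left : L z ∩ {a} ⊆ L z) (n := sK z)
      ((card_le_card inter_subset_right).trans (by fin_cases z <;> simp [sK])) (hL z)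
  have hmem : ∀ z, a ∈ L z → a ∈ L' z := fun z hz => haL' z (by simp [hz])
  obtain ⟨e, he, φ, hφ⟩ := exists_isListColoring_erase_of_leaf (isTree_pathGraph 3)
    (L := fun i => L' i.succ) (C := L' 0) (v := 0) (w := 1) (x := 2)
    (fun i => by fin_cases i <;> simp [hcard, sK]) (by simp [hcard, sK])
    (fun z hz => by rw [pathGraph_adj] at hz; grind) (by simp [pathGraph_adj]) (by decide)
    (hmem 2 haw) (hmem 3 hax)
  exact ⟨_, (hφ.cons he).mono hL'L⟩

theorem Kgraph_sReducible_general (α : Type*) :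
    (⊤ : Kgraph.Subgraph).deleteEdges {s((2 : Fin 5), (3 : Fin 5))} ≠ ⊤ ∧
    ∀ L : Fin 5 → Finset α, (∀ z, sK z ≤ #(L z)) →
      (∃ φ, IsListColoring_s6
        ((⊤ : Kgraph.Subgraph).deleteEdges {s((2 : Fin 5), (3 : Fin 5))}).spanningCoe L φ) →
      ∃ φ, IsListColoring_s6 Kgraph L φ := by
  refine ⟨deleteEdges_singleton_ne_top (by simp [Kgraph]), fun L hL ⟨φ, hφ⟩ => ?_⟩
  rcases eq_or_ne (φ 2) (φ 3) with heq | hne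
  · exact exists_isListColoring_Kgraph_of_mem hL (hφ.1 2) (heq ▸ hφ.1 3)
  · rw [← Subgraph.deleteEdges_spanningCoe_eq, Subgraph.spanningCoe_top] at hφ
    exact ⟨φ, hφ.of_deleteEdges hne⟩

/-- `K` is `s`-reducible, witnessed by the proper subgraph `H = K − wx` (the subgraph
obtained by deleting the edge `wx`): for every `s`-list assignment `L`, if `K − wx` is
`L`-colorable then `K` is `L`-colorable. -/
theorem Kgraph_sReducible :
    (⊤ : Kgraph.Subgraph).deleteEdges {s((2 : Fin 5), (3 : Fin 5))} ≠ ⊤ ∧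
    ∀ L : Fin 5 → Finset ℕ, (∀ z, sK z ≤ (L z).card) →
      (∃ φ : Fin 5 → ℕ,
        (∀ v ∈ ((⊤ : Kgraph.Subgraph).deleteEdges {s((2 : Fin 5), (3 : Fin 5))}).verts,
          φ v ∈ L v) ∧
        ∀ ⦃u v⦄, ((⊤ : Kgraph.Subgraph).deleteEdges {s((2 : Fin 5), (3 : Fin 5))}).Adj u v →
          φ u ≠ φ v) →
      ∃ φ : Fin 5 → ℕ, (∀ v, φ v ∈ L v) ∧ ∀ ⦃u v⦄, Kgraph.Adj u v → φ u ≠ φ v := by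
  obtain ⟨hne, hred⟩ := Kgraph_sReducible_general ℕ
  exact ⟨hne, fun L hL ⟨φ, hmem, hφ⟩ => hred L hL ⟨φ, fun v => hmem v (Set.mem_univ v), hφ⟩⟩
end
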